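/- If there exists X_α^0 ∈ 𝒳_α with E_{λQ_α^c}[X_α^0] = γ_α^c and E_μ[X_α^0] < α, then γ_α^c = λ. -/

import Mathlib

open MeasureTheory Filter Topology
open scoped ENNReal

/-- `X` belongs to the space `𝒳` of bounded measurable real-valued functions on `Ω`. -/
def MemX {Ω : Type*} [MeasurableSpace Ω] (X : Ω → ℝ) : Prop :=
  Measurable X ∧ ∃ M : ℝ, ∀ ω, |X ω| ≤ M

/-- A sublinear operator on `𝒳`: monotone, constant preserving, subadditive and
positively homogeneous. -/
def IsSublinearOp {Ω : Type*} [MeasurableSpace Ω] (ρ : (Ω → ℝ) → ℝ) : Prop :=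
  (∀ X Y : Ω → ℝ, MemX X → MemX Y → (∀ ω, Y ω ≤ X ω) → ρ Y ≤ ρ X) ∧
  (∀ c : ℝ, ρ (fun _ => c) = c) ∧
  (∀ X Y : Ω → ℝ, MemX X → MemX Y → ρ (X + Y) ≤ ρ X + ρ Y) ∧
  (∀ c : ℝ, 0 ≤ c → ∀ X : Ω → ℝ, MemX X → ρ (c • X) = c * ρ X)

/-- A linear functional on `𝒳`. -/
def IsLinearOp {Ω : Type*} [MeasurableSpace Ω] (L : (Ω → ℝ) → ℝ) : Prop :=
  (∀ X Y : Ω → ℝ, MemX X → MemX Y → L (X + Y) = L X + L Y) ∧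
  (∀ (c : ℝ) (X : Ω → ℝ), MemX X → L (c • X) = c * L X)

/-- `L` is dominated by `ρ` on `𝒳`. -/
def Dominated {Ω : Type*} [MeasurableSpace Ω] (L ρ : (Ω → ℝ) → ℝ) : Prop :=
  ∀ X : Ω → ℝ, MemX X → L X ≤ ρ X

/-- The conjugate operator `E_ῡ[X] := -E_υ[-X]`. -/
def conjOp {Ω : Type*} (ρ : (Ω → ℝ) → ℝ) : (Ω → ℝ) → ℝ := fun X => -ρ (-X)

/-- The set `𝒳_α` of test functions at significance level `α`. -/
def testSet {Ω : Type*} [MeasurableSpace Ω] (Emu : (Ω → ℝ) → ℝ) (α : ℝ) : Set (Ω → ℝ) :=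
  {X | MemX X ∧ (∀ ω, 0 ≤ X ω ∧ X ω ≤ 1) ∧ Emu X ≤ α}

/-- A positive normalized linear functional `Qp` is *pure additive* if there is a
sequence of measurable sets `A n ↓ ∅` with `Qp(1_{A n}) → 1`. -/
def PureAdditive {Ω : Type*} [MeasurableSpace Ω] (Qp : (Ω → ℝ) → ℝ) : Prop :=
  ∃ A : ℕ → Set Ω, (∀ n, MeasurableSet (A n)) ∧ Antitone A ∧ (⋂ n, A n) = ∅ ∧
    Tendsto (fun n => Qp ((A n).indicator fun _ => (1 : ℝ))) atTop (𝓝 1)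

/-- Hypothesis (H1): for every sequence of measurable sets `A n ↓ ∅` such that
`lim E_υ[1_{A n}]` exists and is nonzero, one has `lim E_μ[1_{A n}] = 0`. -/
def HypH1 {Ω : Type*} [MeasurableSpace Ω] (Emu Eups : (Ω → ℝ) → ℝ) : Prop :=
  ∀ A : ℕ → Set Ω, (∀ n, MeasurableSet (A n)) → Antitone A → (⋂ n, A n) = ∅ →
    ∀ l : ℝ, Tendsto (fun n => Eups ((A n).indicator fun _ => (1 : ℝ))) atTop (𝓝 l) →
      l ≠ 0 →
      Tendsto (fun n => Emu ((A n).indicator fun _ => (1 : ℝ))) atTop (𝓝 0)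

/-- Hypothesis (H2): for every `X ∈ 𝒳_α` with `E_μ[X] > 0` and every positive
integer `K`, `E_μ[X] > E_μ[(X - 1/K)⁺]`. -/
def HypH2 {Ω : Type*} [MeasurableSpace Ω] (Emu : (Ω → ℝ) → ℝ) (α : ℝ) : Prop :=
  ∀ X ∈ testSet Emu α, 0 < Emu X → ∀ K : ℕ, 0 < K →
    Emu (fun ω => max (X ω - 1 / (K : ℝ)) 0) < Emu X

/-- Hypothesis (H3): for every sequence of measurable sets `A n ↓ ∅`,
`lim E_μ[1_{A n}] < 1` and `lim E_υ[1_{A n}] < 1`. -/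
def HypH3 {Ω : Type*} [MeasurableSpace Ω] (Emu Eups : (Ω → ℝ) → ℝ) : Prop :=
  ∀ A : ℕ → Set Ω, (∀ n, MeasurableSet (A n)) → Antitone A → (⋂ n, A n) = ∅ →
    (∀ l : ℝ, Tendsto (fun n => Emu ((A n).indicator fun _ => (1 : ℝ))) atTop (𝓝 l) →
      l < 1) ∧
    (∀ l : ℝ, Tendsto (fun n => Eups ((A n).indicator fun _ => (1 : ℝ))) atTop (𝓝 l) →
      l < 1)

/-!
A constraint `f y ≤ α` with convex `f` that is slack at a maximizer `x` of a concave objective can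
be dropped: moving from `x` slightly towards any competitor stays feasible, and concavity makes the
objective increase along this segment if the competitor is better. Hence a solution of (4.3) with
`E_μ[X] < α` maximizes `λ ∫ X dQ` over all test functions, where the constant `1` has value `λ`.
-/

lemma isMaxOn_of_slack_constraint {E : Type*} [AddCommGroup E] [Module ℝ E] {C : Set E}
    {f g : E → ℝ} {α : ℝ} {x : E} (hf : ConvexOn ℝ C f) (hg : ConcaveOn ℝ C g) (hx : x ∈ C)
    (hmax : IsMaxOn g {y ∈ C | f y ≤ α} x) (hslack : f x < α) : IsMaxOn g C x := by
  intro y hy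
  have hcont : Tendsto (fun t : ℝ => (1 - t) * f x + t * f y) (𝓝[>] 0) (𝓝 (f x)) :=
    tendsto_nhdsWithin_of_tendsto_nhds <| Continuous.tendsto' (by fun_prop) _ _ (by simp)
  obtain ⟨t, hfeas, ht0, ht1⟩ : ∃ t : ℝ, (1 - t) * f x + t * f y < α ∧ 0 < t ∧ t < 1 :=
    ((hcont.eventually_lt_const hslack).and (Ioo_mem_nhdsGT one_pos)).exists
  have hs0 : 0 ≤ 1 - t := sub_nonneg.mpr ht1.le
  have hst : 1 - t + t = 1 := sub_add_cancel 1 t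
  have hchord : (1 - t) * g x + t * g y ≤ g x :=
    (hg.2 hx hy hs0 ht0.le hst).trans <|
      hmax ⟨hf.1 hx hy hs0 ht0.le hst, (hf.2 hx hy hs0 ht0.le hst).trans hfeas.le⟩
  have hscaled : t * g y ≤ t * g x := by linarith
  exact le_of_mul_le_mul_left hscaled ht0

lemma concaveOn_integral {Ω : Type*} [MeasurableSpace Ω] (μ : Measure Ω) :
    ConcaveOn ℝ {X : Ω → ℝ | Integrable X μ} fun X => ∫ ω, X ω ∂μ := by
  refine ⟨fun X hX Y hY a b _ _ _ => (hX.smul a).add (hY.smul b), fun X hX Y hY a b _ _ _ => ?_⟩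
  calc a * ∫ ω, X ω ∂μ + b * ∫ ω, Y ω ∂μ
      = ∫ ω, (a • X) ω ∂μ + ∫ ω, (b • Y) ω ∂μ :=
        (congrArg₂ (· + ·) (integral_smul a X) (integral_smul b Y)).symm
    _ ≤ ∫ ω, (a • X + b • Y) ω ∂μ := (integral_add' (hX.smul a) (hY.smul b)).ge

section BoundedMeasurable

variable {Ω : Type*} [MeasurableSpace Ω] {X Y : Ω → ℝ}

lemma MemX.add (hX : MemX X) (hY : MemX Y) : MemX (X + Y) := by
  obtain ⟨hXm, M, hM⟩ := hX
  obtain ⟨hYm, N, hN⟩ := hY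
  exact ⟨hXm.add hYm, M + N, fun ω => (abs_add_le _ _).trans (add_le_add (hM ω) (hN ω))⟩

lemma MemX.const_smul (c : ℝ) (hX : MemX X) : MemX (c • X) := by
  obtain ⟨hXm, M, hM⟩ := hX
  refine ⟨hXm.const_smul c, |c| * M, fun ω => ?_⟩
  rw [Pi.smul_apply, smul_eq_mul, abs_mul]
  exact mul_le_mul_of_nonneg_left (hM ω) (abs_nonneg c)

lemma MemX.integrable {μ : Measure Ω} [IsFiniteMeasure μ] (hX : MemX X) : Integrable X μ := by
  obtain ⟨hXm, M, hM⟩ := hX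
  exact .of_bound hXm.aestronglyMeasurable M (.of_forall hM)

lemma convex_memX : Convex ℝ {X : Ω → ℝ | MemX X} :=
  fun _ hX _ hY a b _ _ _ => (hX.const_smul a).add (hY.const_smul b)

lemma IsSublinearOp.convexOn {ρ : (Ω → ℝ) → ℝ} (hρ : IsSublinearOp ρ) :
    ConvexOn ℝ {X | MemX X} ρ := by
  obtain ⟨-, -, hsub, hhom⟩ := hρ
  refine ⟨convex_memX, fun X hX Y hY a b ha hb _ => ?_⟩
  calc ρ (a • X + b • Y)
      ≤ ρ (a • X) + ρ (b • Y) := hsub _ _ (hX.const_smul a) (hY.const_smul b)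
    _ = a * ρ X + b * ρ Y := by rw [hhom a ha X hX, hhom b hb Y hY]

end BoundedMeasurable

/-- The test functions of all levels, i.e. the randomized tests: the elements of `𝒳` with values in
`[0, 1]`, the interval being taken in the pointwise order. `testSet` adds the constraint on the
level. -/
def testFunctions (Ω : Type*) [MeasurableSpace Ω] : Set (Ω → ℝ) :=
  {X | MemX X} ∩ Set.Icc 0 1

section TestFunctions

variable {Ω : Type*} [MeasurableSpace Ω]

lemma testSet_eq_sep_testFunctions (Emu : (Ω → ℝ) → ℝ) (α : ℝ) :
    testSet Emu α = {X ∈ testFunctions Ω | Emu X ≤ α} := by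
  ext X
  simp only [testSet, testFunctions, Set.mem_ofPred_eq, Set.mem_inter_iff, Set.mem_Icc,
    Pi.le_def, Pi.zero_apply, Pi.one_apply, forall_and, and_assoc]

lemma one_mem_testFunctions : (1 : Ω → ℝ) ∈ testFunctions Ω :=
  ⟨⟨measurable_one, 1, fun _ => abs_one.le⟩, zero_le_one, le_rfl⟩

lemma convex_testFunctions : Convex ℝ (testFunctions Ω) :=
  convex_memX.inter (convex_Icc 0 1)

lemma integral_le_one_of_mem_testFunctions {Q : Measure Ω} [IsProbabilityMeasure Q] {X : Ω → ℝ}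
    (hX : X ∈ testFunctions Ω) : ∫ ω, X ω ∂Q ≤ 1 := by
  simpa only [Pi.one_apply, integral_const, probReal_univ, smul_eq_mul, mul_one] using
    integral_mono (μ := Q) hX.1.integrable one_mem_testFunctions.1.integrable hX.2.2

lemma concaveOn_mul_integral_testFunctions (Q : Measure Ω) [IsFiniteMeasure Q] {c : ℝ}
    (hc : 0 ≤ c) : ConcaveOn ℝ (testFunctions Ω) fun X => c * ∫ ω, X ω ∂Q :=
  ((concaveOn_integral Q).subset (fun _ hX => hX.1.integrable)
    convex_testFunctions).smul hc

theorem gamma_eq_lambda_general {Emu : (Ω → ℝ) → ℝ} (hEmu : ConvexOn ℝ (testFunctions Ω) Emu)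
    {α lam γ : ℝ} (hlam : 0 ≤ lam) (Qc : Measure Ω) [IsProbabilityMeasure Qc]
    (hγ : γ = sSup ((fun X : Ω → ℝ => lam * ∫ ω, X ω ∂Qc) '' testSet Emu α))
    (hex : ∃ X ∈ testSet Emu α, lam * ∫ ω, X ω ∂Qc = γ ∧ Emu X < α) :
    γ = lam := by
  rw [testSet_eq_sep_testFunctions] at hγ hex
  obtain ⟨X, ⟨hX, -⟩, hXγ, hslack⟩ := hex
  have hle : ∀ Y ∈ testFunctions Ω, lam * ∫ ω, Y ω ∂Qc ≤ lam := fun Y hY =>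
    mul_le_of_le_one_right hlam (integral_le_one_of_mem_testFunctions hY)
  have hbdd : BddAbove
      ((fun X : Ω → ℝ => lam * ∫ ω, X ω ∂Qc) '' {X ∈ testFunctions Ω | Emu X ≤ α}) :=
    ⟨lam, Set.forall_mem_image.mpr fun Y hY => hle Y hY.1⟩
  have hmax : IsMaxOn (fun X : Ω → ℝ => lam * ∫ ω, X ω ∂Qc)
      {X ∈ testFunctions Ω | Emu X ≤ α} X := fun Y hY =>
    (le_csSup hbdd (Set.mem_image_of_mem _ hY)).trans_eq (hγ.symm.trans hXγ.symm)
  have hone : lam * ∫ _, 1 ∂Qc ≤ lam * ∫ ω, X ω ∂Qc :=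
    isMaxOn_of_slack_constraint hEmu (concaveOn_mul_integral_testFunctions Qc hlam) hX hmax hslack
      one_mem_testFunctions
  rw [integral_const, probReal_univ, one_smul, mul_one] at hone
  exact hXγ ▸ (hle X hX).antisymm hone

end TestFunctions

/-- Corollary 4.3: if there is a solution `X_α^0` of problem (4.3) with
`E_μ[X_α^0] < α`, then `γ_α^c = λ`. -/
theorem gamma_eq_lambda {Ω : Type*} [MeasurableSpace Ω]
    (Emu Eups : (Ω → ℝ) → ℝ)
    (hEmu : IsSublinearOp Emu) (hEups : IsSublinearOp Eups)
    (α : ℝ) (hα0 : 0 < α) (hα1 : α < 1)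
    (lam : ℝ) (hlam0 : 0 ≤ lam) (hlam1 : lam ≤ 1)
    (Qc : Measure Ω) (hQc : IsProbabilityMeasure Qc)
    (Qp : (Ω → ℝ) → ℝ) (hQplin : IsLinearOp Qp)
    (hQppos : ∀ X : Ω → ℝ, MemX X → (∀ ω, 0 ≤ X ω) → 0 ≤ Qp X)
    (hQpone : Qp (fun _ => 1) = 1) (hQppure : PureAdditive Qp)
    (Qa : (Ω → ℝ) → ℝ) (hQalin : IsLinearOp Qa) (hQadom : Dominated Qa Eups)
    (hQasup : sSup (Qa '' testSet Emu α) = sSup (conjOp Eups '' testSet Emu α))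
    (hQadec : ∀ X : Ω → ℝ, MemX X → Qa X = lam * ∫ ω, X ω ∂Qc + (1 - lam) * Qp X)
    (γ : ℝ) (hγ : γ = sSup ((fun X : Ω → ℝ => lam * ∫ ω, X ω ∂Qc) '' testSet Emu α))
    (hex : ∃ Xa0 ∈ testSet Emu α, lam * ∫ ω, Xa0 ω ∂Qc = γ ∧ Emu Xa0 < α) :
    γ = lam := by
  exact gamma_eq_lambda_general (hEmu.convexOn.subset Set.inter_subset_left convex_testFunctions)
    hlam0 Qc hγ hex
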